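/- Suppose each f_i is μ_i-convex for some μ_i ∈ ℝ and set μ = min_{i=1,…,m} μ_i. If μ ≥ 0, then u₀(x) ≤ w_μ(x) and u_ℓ(x) ≤ w_{μ+ℓ}(x) for every ℓ > 0 and every x ∈ S (in the extended reals when μ = 0 or for u₀). If μ < 0, then u_{−μ+ℓ}(x) ≤ w_ℓ(x) for every ℓ > 0 and every x ∈ S. -/

import Mathlib

open scoped RealInnerProductSpace

/-- `σ`-convexity: `h(αa + (1-α)b) ≤ αh(a) + (1-α)h(b) - (α(1-α)σ/2)‖a - b‖²`. -/
def SigmaConvex {n : ℕ} (σ : ℝ) (h : EuclideanSpace ℝ (Fin n) → ℝ) : Prop :=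
  ∀ a b : EuclideanSpace ℝ (Fin n), ∀ α ∈ Set.Icc (0 : ℝ) 1,
    h (α • a + (1 - α) • b) ≤
      α * h a + (1 - α) * h b - α * (1 - α) * σ / 2 * ‖a - b‖ ^ 2

/-- The simple merit function `u₀(x) = sup_{y ∈ S} min_i (F i x - F i y)` (extended reals). -/
noncomputable def meritU0 {n m : ℕ} (S : Set (EuclideanSpace ℝ (Fin n)))
    (F : Fin m → EuclideanSpace ℝ (Fin n) → ℝ)
    (x : EuclideanSpace ℝ (Fin n)) : EReal :=
  ⨆ y ∈ S, (((⨅ i, (F i x - F i y)) : ℝ) : EReal)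

/-- The regularized merit function
`u_ℓ(x) = max_{y ∈ S} min_i (F i x - F i y - (ℓ/2)‖x - y‖²)`. -/
noncomputable def meritU {n m : ℕ} (ℓ : ℝ) (S : Set (EuclideanSpace ℝ (Fin n)))
    (F : Fin m → EuclideanSpace ℝ (Fin n) → ℝ)
    (x : EuclideanSpace ℝ (Fin n)) : ℝ :=
  sSup ((fun y => ⨅ i, (F i x - F i y - ℓ / 2 * ‖x - y‖ ^ 2)) '' S)

/-- The regularized and partially linearized merit function
`w_ℓ(x) = max_{y ∈ S} min_i (⟨∇f_i(x), x - y⟩ + g_i(x) - g_i(y) - (ℓ/2)‖x - y‖²)`. -/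
noncomputable def meritW {n m : ℕ} (ℓ : ℝ) (S : Set (EuclideanSpace ℝ (Fin n)))
    (Gf : Fin m → EuclideanSpace ℝ (Fin n) → EuclideanSpace ℝ (Fin n))
    (g : Fin m → EuclideanSpace ℝ (Fin n) → ℝ)
    (x : EuclideanSpace ℝ (Fin n)) : ℝ :=
  sSup ((fun y => ⨅ i, (⟪Gf i x, x - y⟫ + g i x - g i y - ℓ / 2 * ‖x - y‖ ^ 2)) '' S)

/-- The extended-real version of `w_ℓ` (`w_ℓ(x) = sup_{y ∈ S} ...`, needed for `ℓ ≥ 0`). -/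
noncomputable def meritWE {n m : ℕ} (ℓ : ℝ) (S : Set (EuclideanSpace ℝ (Fin n)))
    (Gf : Fin m → EuclideanSpace ℝ (Fin n) → EuclideanSpace ℝ (Fin n))
    (g : Fin m → EuclideanSpace ℝ (Fin n) → ℝ)
    (x : EuclideanSpace ℝ (Fin n)) : EReal :=
  ⨆ y ∈ S,
    (((⨅ i, (⟪Gf i x, x - y⟫ + g i x - g i y - ℓ / 2 * ‖x - y‖ ^ 2)) : ℝ) : EReal)

theorem aux_grad {n : ℕ} (σ : ℝ) (h : EuclideanSpace ℝ (Fin n) → ℝ)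
    (hs : SigmaConvex σ h) (x y G : EuclideanSpace ℝ (Fin n)) (hG : HasGradientAt h G x) :
    h x - h y ≤ ⟪G, x - y⟫ - σ / 2 * ‖x - y‖ ^ 2 := by
  have hd : HasDerivAt (fun t : ℝ => h (x + t • (y - x))) ⟪G, y - x⟫ 0 := by
    have h1 : HasDerivAt (fun t : ℝ => x + t • (y - x)) (y - x) 0 := by
      simpa using ((hasDerivAt_id (0 : ℝ)).smul_const (y - x)).const_add x
    have h2 : HasFDerivAt h (InnerProductSpace.toDual ℝ _ G) (x + (0 : ℝ) • (y - x)) := by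
      simpa using hG.hasFDerivAt
    have h3 := h2.comp_hasDerivAt (0 : ℝ) h1
    simpa [Function.comp_def] using h3
  have ht := hd.tendsto_slope_zero_right
  have hc : Filter.Tendsto (fun t : ℝ => h y - h x - (1 - t) * σ / 2 * ‖y - x‖ ^ 2)
      (nhdsWithin 0 (Set.Ioi 0)) (nhds (h y - h x - (1 - 0) * σ / 2 * ‖y - x‖ ^ 2)) := by
    apply Filter.Tendsto.mono_left _ nhdsWithin_le_nhds
    apply Continuous.tendsto
    fun_prop
  have key := le_of_tendsto_of_tendsto ht hc (by
    filter_upwards [Ioo_mem_nhdsGT (show (0 : ℝ) < 1 by norm_num)] with t ht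
    have h1 := hs y x t ⟨ht.1.le, ht.2.le⟩
    have e : t • y + (1 - t) • x = x + t • (y - x) := by
      rw [smul_sub, sub_smul, one_smul]; abel
    rw [e] at h1
    simp only [zero_add, zero_smul, add_zero, smul_eq_mul]
    rw [inv_mul_le_iff₀ ht.1]
    linarith)
  have e1 : ⟪G, y - x⟫ = -⟪G, x - y⟫ := by rw [← inner_neg_right, neg_sub]
  rw [e1, norm_sub_rev y x] at key
  linarith

theorem aux_lower {n : ℕ} (g : EuclideanSpace ℝ (Fin n) → ℝ) (hg : ConvexOn ℝ Set.univ g)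
    (x : EuclideanSpace ℝ (Fin n)) : ∃ K : ℝ, ∀ y, g x - g y ≤ K * ‖x - y‖ := by
  have hc : ContinuousOn g Set.univ := hg.continuousOn isOpen_univ
  obtain ⟨M, hM⟩ := (isCompact_closedBall x 1).bddAbove_image (hc.mono (Set.subset_univ _))
  refine ⟨M - g x, fun y => ?_⟩
  rcases eq_or_ne x y with rfl | hxy
  · simp
  have hd : 0 < ‖x - y‖ := norm_pos_iff.2 (sub_ne_zero.2 hxy)
  set d := ‖x - y‖ with hdd
  have hz : g (x + d⁻¹ • (x - y)) ≤ M := by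
    apply hM
    refine ⟨_, ?_, rfl⟩
    simp [norm_smul, ← hdd, abs_of_pos hd, hd.ne']
  have hcv := hg.2 (Set.mem_univ y) (Set.mem_univ (x + d⁻¹ • (x - y)))
    (show 0 ≤ 1 / (1 + d) by positivity) (show 0 ≤ d / (1 + d) by positivity)
    (by field_simp)
  have e : (1 / (1 + d)) • y + (d / (1 + d)) • (x + d⁻¹ • (x - y)) = x := by
    have h1 : (1 + d) ≠ 0 := by positivity
    have h2 : d ≠ 0 := hd.ne'
    match_scalars <;> field_simp <;> ring
  rw [e] at hcv
  simp only [smul_eq_mul] at hcv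
  have h3 : g x * (1 + d) ≤ g y + d * g (x + d⁻¹ • (x - y)) := by
    have h1 : 0 < 1 + d := by positivity
    calc g x * (1 + d) ≤ _ := mul_le_mul_of_nonneg_right hcv h1.le
      _ = _ := by field_simp
  nlinarith

theorem aux_le {n m : ℕ} (hm : 0 < m)
    (S : Set (EuclideanSpace ℝ (Fin n))) (hS : S.Nonempty)
    (f g : Fin m → EuclideanSpace ℝ (Fin n) → ℝ)
    (Gf : Fin m → EuclideanSpace ℝ (Fin n) → EuclideanSpace ℝ (Fin n))
    (hGf : ∀ i y, HasGradientAt (f i) (Gf i y) y)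
    (hgconv : ∀ i, ConvexOn ℝ Set.univ (g i))
    (μv : Fin m → ℝ) (hμ : ∀ i, SigmaConvex (μv i) (f i)) (a b : ℝ) (hb : 0 < b)
    (hab : b ≤ (⨅ i, μv i) + a) (x : EuclideanSpace ℝ (Fin n)) :
    meritU a S (fun i y => f i y + g i y) x ≤ meritW b S Gf g x := by
  haveI : Nonempty (Fin m) := ⟨⟨0, hm⟩⟩
  unfold meritU meritW
  apply csSup_le (hS.image _)
  rintro _ ⟨y, hy, rfl⟩
  refine le_trans ?_ (le_csSup ?_ ⟨y, hy, rfl⟩)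
  · apply ciInf_mono (Set.finite_range _).bddBelow
    intro i
    have h1 := aux_grad _ _ (hμ i) x y _ (hGf i x)
    have h2 : (⨅ i, μv i) ≤ μv i := ciInf_le (Set.finite_range _).bddBelow i
    have h3 : 0 ≤ (μv i + a - b) * ‖x - y‖ ^ 2 := mul_nonneg (by linarith) (by positivity)
    dsimp only
    linarith
  · obtain ⟨K, hK⟩ := aux_lower _ (hgconv ⟨0, hm⟩) x
    refine ⟨(‖Gf ⟨0, hm⟩ x‖ + K) ^ 2 / (2 * b), ?_⟩
    rintro _ ⟨z, hz, rfl⟩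
    refine (ciInf_le (Set.finite_range _).bddBelow ⟨0, hm⟩).trans ?_
    have h1 := hK z
    have h2 := real_inner_le_norm (Gf ⟨0, hm⟩ x) (x - z)
    set C := ‖Gf ⟨0, hm⟩ x‖
    set d := ‖x - z‖
    have h3 : (C + K) * d - b / 2 * d ^ 2 ≤ (C + K) ^ 2 / (2 * b) := by
      rw [le_div_iff₀ (by positivity)]
      nlinarith [sq_nonneg (C + K - b * d)]
    linarith

/-- if each `f_i` is `μ_i`-convex and `μ = min_i μ_i`, then for `μ ≥ 0` one
has `u₀ ≤ w_μ` and `u_ℓ ≤ w_{μ+ℓ}` on `S` for every `ℓ > 0`, while for `μ < 0` one has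
`u_{-μ+ℓ} ≤ w_ℓ` on `S` for every `ℓ > 0`. -/
theorem merit_comparison_mu_convex {n m : ℕ} (hm : 0 < m)
    (S : Set (EuclideanSpace ℝ (Fin n))) (hS : S.Nonempty)
    (hSclosed : IsClosed S) (hSconv : Convex ℝ S)
    (f g : Fin m → EuclideanSpace ℝ (Fin n) → ℝ)
    (Gf : Fin m → EuclideanSpace ℝ (Fin n) → EuclideanSpace ℝ (Fin n))
    (hGf : ∀ i y, HasGradientAt (f i) (Gf i y) y)
    (hGfc : ∀ i, Continuous (Gf i))
    (hgconv : ∀ i, ConvexOn ℝ Set.univ (g i))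
    (μv : Fin m → ℝ) (hμ : ∀ i, SigmaConvex (μv i) (f i)) :
    ((0 ≤ ⨅ i, μv i) →
      (∀ x ∈ S, meritU0 S (fun i y => f i y + g i y) x ≤ meritWE (⨅ i, μv i) S Gf g x) ∧
      (∀ ℓ : ℝ, 0 < ℓ → ∀ x ∈ S,
        meritU ℓ S (fun i y => f i y + g i y) x ≤ meritW ((⨅ i, μv i) + ℓ) S Gf g x)) ∧
    ((⨅ i, μv i) < 0 →
      ∀ ℓ : ℝ, 0 < ℓ → ∀ x ∈ S,
        meritU (-(⨅ i, μv i) + ℓ) S (fun i y => f i y + g i y) x ≤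
          meritW ℓ S Gf g x) := by
  haveI : Nonempty (Fin m) := ⟨⟨0, hm⟩⟩
  refine ⟨fun h0 => ⟨fun x hx => ?_, fun l hl x hx => ?_⟩, fun h0 l hl x hx => ?_⟩
  · unfold meritU0 meritWE
    refine iSup₂_mono fun y hy => ?_
    rw [EReal.coe_le_coe_iff]
    apply ciInf_mono (Set.finite_range _).bddBelow
    intro i
    have h1 := aux_grad _ _ (hμ i) x y _ (hGf i x)
    have h2 : (⨅ i, μv i) ≤ μv i := ciInf_le (Set.finite_range _).bddBelow i
    have h3 : 0 ≤ (μv i - ⨅ i, μv i) * ‖x - y‖ ^ 2 := mul_nonneg (by linarith) (by positivity)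
    dsimp only
    linarith
  · exact aux_le hm S hS f g Gf hGf hgconv μv hμ _ _ (by linarith) le_rfl x
  · exact aux_le hm S hS f g Gf hGf hgconv μv hμ _ _ hl (by linarith) x
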